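/- With sech t = 1/cosh t and Φₛ(s) = (1/8)·(15·sech²(s) − 2·cosh²(s) − 5 − 15·s·tanh(s)·sech²(s)), the improper integral identity 4·∫₀^∞ s²·(Φₛ(s) + (1/16)·e^{2s} + 3/4) ds = −(1/16)·(5π² + 1) holds (in particular the integrand is integrable on [0,∞)). -/

import Mathlib

open MeasureTheory

/-- The hyperbolic secant. -/
noncomputable def sech (t : ℝ) : ℝ := 1 / Real.cosh t

/-- The symmetric complementary function. -/
noncomputable def Phi_s (y : ℝ) : ℝ :=
  (1/8) * (15 * (sech y) ^ 2 - 2 * (Real.cosh y) ^ 2 - 5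
    - 15 * y * Real.tanh y * (sech y) ^ 2)

/-!
Since `cosh² s = (e^{2s} + 2 + e^{-2s}) / 4`, the growing terms of `Φₛ` cancel and the integrand is
`(15/8) s² sech² s - (15/8) s³ tanh s sech² s - (1/16) s² e^{-2s}`. Because `sech² = tanh'` and
`-2 tanh sech² = (sech²)'`, integration by parts reduces the first two moments to the Fermi–Dirac
integral of `s (1 - tanh s) = 2s / (e^{2s} + 1)`. Expanding the latter as a geometric series in
`-e^{-2s}` turns it into `∑ (-1)ⁿ / (n + 1)² = π² / 12`, which equals
`-π² B₂(1/2)` by the Fourier expansion of the Bernoulli polynomial `B₂`.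
-/

open Asymptotics Filter Set
open scoped Nat Topology

section ExponentialDecay

variable {f f' : ℝ → ℝ} {a b : ℝ}

lemma isBigO_pow_mul_exp_neg {c : ℝ} (hcb : c < b)
    (hf : f =O[atTop] fun s ↦ Real.exp (-b * s)) (k : ℕ) :
    (fun s ↦ s ^ k * f s) =O[atTop] fun s ↦ Real.exp (-c * s) := by
  refine ((isLittleO_pow_exp_pos_mul_atTop k (sub_pos.2 hcb)).isBigO.mul hf).congr_right
    fun s ↦ ?_
  rw [← Real.exp_add]
  ring_nf

lemma integrableOn_Ioi_pow_mul_of_isBigO_exp_neg (hb : 0 < b)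
    (hcont : ContinuousOn f (Ici a)) (hf : f =O[atTop] fun s ↦ Real.exp (-b * s)) (k : ℕ) :
    IntegrableOn (fun s ↦ s ^ k * f s) (Ioi a) :=
  integrable_of_isBigO_exp_neg (half_pos hb) (by fun_prop)
    (isBigO_pow_mul_exp_neg (half_lt_self hb) hf k)

lemma tendsto_pow_mul_atTop_zero_of_isBigO_exp_neg (hb : 0 < b)
    (hf : f =O[atTop] fun s ↦ Real.exp (-b * s)) (k : ℕ) :
    Tendsto (fun s ↦ s ^ k * f s) atTop (𝓝 0) :=
  (isBigO_pow_mul_exp_neg (half_lt_self hb) hf k).trans_tendsto <|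
    Real.tendsto_exp_atBot.comp <|
      tendsto_id.const_mul_atTop_of_neg (neg_neg_of_pos (half_pos hb))

lemma integral_Ioi_pow_succ_mul_deriv_of_isBigO_exp_neg (hb : 0 < b)
    (hderiv : ∀ s ∈ Ici 0, HasDerivAt f (f' s) s) (hcont : ContinuousOn f' (Ici 0))
    (hf : f =O[atTop] fun s ↦ Real.exp (-b * s))
    (hf' : f' =O[atTop] fun s ↦ Real.exp (-b * s)) (k : ℕ) :
    ∫ s in Ioi 0, s ^ (k + 1) * f' s = -((k + 1) * ∫ s in Ioi 0, s ^ k * f s) := by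
  have hf_cont : ContinuousOn f (Ici 0) := HasDerivAt.continuousOn hderiv
  have hpow (s : ℝ) : HasDerivAt (fun s : ℝ ↦ s ^ (k + 1)) ((k + 1) * s ^ k) s := by
    simpa using hasDerivAt_pow (k + 1) s
  have hzero : Tendsto (fun s ↦ s ^ (k + 1) * f s) (𝓝[>] 0) (𝓝 0) := by
    have hprod : ContinuousOn (fun s ↦ s ^ (k + 1) * f s) (Ici 0) := by fun_prop
    simpa [ContinuousWithinAt] using (hprod 0 self_mem_Ici).mono Ioi_subset_Ici_self
  have h := integral_Ioi_mul_deriv_eq_deriv_mul (a := 0)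
    (fun s _ ↦ hpow s) (fun s hs ↦ hderiv s (Ioi_subset_Ici_self hs))
    (integrableOn_Ioi_pow_mul_of_isBigO_exp_neg hb hcont hf' (k + 1))
    (((integrableOn_Ioi_pow_mul_of_isBigO_exp_neg hb hf_cont hf k).const_mul (k + 1 : ℝ)).congr
      (.of_forall fun s ↦ (mul_assoc ..).symm))
    hzero (tendsto_pow_mul_atTop_zero_of_isBigO_exp_neg hb hf (k + 1))
  simpa only [mul_assoc, integral_const_mul, sub_zero, zero_sub] using h

end ExponentialDecay

lemma sech_sq_eq_one_sub_tanh_sq (s : ℝ) : sech s ^ 2 = 1 - Real.tanh s ^ 2 := by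
  have hcosh := (Real.cosh_pos s).ne'
  rw [sech, Real.tanh_eq_sinh_div_cosh]
  field_simp
  rw [Real.cosh_sq]
  ring

lemma hasDerivAt_tanh (s : ℝ) : HasDerivAt Real.tanh (sech s ^ 2) s := by
  have hquot := (Real.hasDerivAt_sinh s).div (Real.hasDerivAt_cosh s) (Real.cosh_pos s).ne'
  have htanh : Real.tanh = Real.sinh / Real.cosh := funext Real.tanh_eq_sinh_div_cosh
  rw [htanh]
  refine hquot.congr_deriv ?_
  rw [sech, div_pow, one_pow, ← Real.cosh_sq_sub_sinh_sq s]
  ring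

lemma hasDerivAt_sech_sq (s : ℝ) :
    HasDerivAt (fun s ↦ sech s ^ 2) (-2 * (Real.tanh s * sech s ^ 2)) s := by
  simp only [sech_sq_eq_one_sub_tanh_sq]
  refine (((hasDerivAt_tanh s).pow 2).const_sub 1).congr_deriv ?_
  rw [sech_sq_eq_one_sub_tanh_sq]
  ring

lemma continuous_tanh : Continuous Real.tanh :=
  continuous_iff_continuousAt.2 fun s ↦ (hasDerivAt_tanh s).continuousAt

lemma continuous_sech_sq : Continuous fun s ↦ sech s ^ 2 :=
  continuous_iff_continuousAt.2 fun s ↦ (hasDerivAt_sech_sq s).continuousAt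

lemma one_sub_tanh_eq (s : ℝ) : 1 - Real.tanh s = 2 / (Real.exp (2 * s) + 1) := by
  rw [Real.tanh_eq, Real.exp_neg, two_mul, Real.exp_add]
  field_simp
  ring

lemma isBigO_tanh_one : Real.tanh =O[atTop] fun _ ↦ (1 : ℝ) :=
  .of_bound 1 <| .of_forall fun s ↦ by simpa using (Real.abs_tanh_lt_one s).le

lemma isBigO_one_sub_tanh :
    (fun s ↦ 1 - Real.tanh s) =O[atTop] fun s ↦ Real.exp (-2 * s) := by
  refine .of_bound 2 <| .of_forall fun s ↦ ?_
  rw [one_sub_tanh_eq, Real.norm_of_nonneg (by positivity), Real.norm_of_nonneg (by positivity),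
    neg_mul, Real.exp_neg, ← div_eq_mul_inv]
  gcongr
  exact le_add_of_nonneg_right zero_le_one

lemma isBigO_sech_sq : (fun s ↦ sech s ^ 2) =O[atTop] fun s ↦ Real.exp (-2 * s) := by
  have hfactor : (fun s ↦ sech s ^ 2) = fun s ↦ (1 - Real.tanh s) * (1 + Real.tanh s) := by
    ext s
    rw [sech_sq_eq_one_sub_tanh_sq]
    ring
  rw [hfactor]
  simpa only [mul_one] using isBigO_one_sub_tanh.mul ((isBigO_refl _ _).add isBigO_tanh_one)

lemma isBigO_tanh_mul_sech_sq :
    (fun s ↦ Real.tanh s * sech s ^ 2) =O[atTop] fun s ↦ Real.exp (-2 * s) := by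
  simpa only [one_mul] using isBigO_tanh_one.mul isBigO_sech_sq

lemma integral_Ioi_pow_succ_mul_sech_sq (k : ℕ) :
    ∫ s in Ioi 0, s ^ (k + 1) * sech s ^ 2 =
      (k + 1) * ∫ s in Ioi 0, s ^ k * (1 - Real.tanh s) := by
  have h := integral_Ioi_pow_succ_mul_deriv_of_isBigO_exp_neg two_pos
    (fun s _ ↦ (hasDerivAt_tanh s).const_sub 1) continuous_sech_sq.neg.continuousOn
    isBigO_one_sub_tanh isBigO_sech_sq.neg_left k
  simpa only [mul_neg, integral_neg, neg_inj] using h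

lemma integral_Ioi_pow_succ_mul_tanh_mul_sech_sq (k : ℕ) :
    ∫ s in Ioi 0, s ^ (k + 1) * (Real.tanh s * sech s ^ 2) =
      (k + 1) / 2 * ∫ s in Ioi 0, s ^ k * sech s ^ 2 := by
  have h := integral_Ioi_pow_succ_mul_deriv_of_isBigO_exp_neg two_pos
    (fun s _ ↦ hasDerivAt_sech_sq s)
    ((continuous_tanh.mul continuous_sech_sq).const_mul (-2)).continuousOn isBigO_sech_sq
    (isBigO_tanh_mul_sech_sq.const_mul_left (-2)) k
  simp only [mul_left_comm _ (-2 : ℝ), integral_const_mul] at h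
  linarith

lemma hasSum_integral_Ioi_pow_mul_of_hasSum_exp {ι : Type*} [Countable ι] {a p : ι → ℝ}
    {F : ℝ → ℝ} {k : ℕ} (hp : ∀ i, 0 < p i)
    (hF : ∀ t ∈ Ioi 0, HasSum (fun i ↦ a i * Real.exp (-p i * t)) (F t))
    (hsum : Summable fun i ↦ |a i| / p i ^ (k + 1)) :
    HasSum (fun i ↦ k ! * a i / p i ^ (k + 1)) (∫ t in Ioi 0, t ^ k * F t) := by
  have hre : ((k : ℂ) + 1).re = (k + 1 : ℕ) := by simp
  have h := hasSum_mellin (a := fun i ↦ (a i : ℂ)) (F := fun t ↦ (F t : ℂ)) (s := k + 1)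
    (fun i ↦ .inr (hp i)) (hre ▸ Nat.cast_pos.2 k.succ_pos) (fun t ht ↦ mod_cast hF t ht)
    (by simpa only [hre, Real.rpow_natCast, Complex.norm_real, Real.norm_eq_abs] using hsum)
  have hmellin : mellin (fun t ↦ (F t : ℂ)) (k + 1) = ↑(∫ t in Ioi 0, t ^ k * F t) := by
    simp only [mellin, add_sub_cancel_right, Complex.cpow_natCast, smul_eq_mul,
      ← integral_complex_ofReal]
    push_cast
    rfl
  rw [hmellin, Complex.Gamma_nat_eq_factorial] at h
  exact_mod_cast h

lemma hasSum_inv_exp_add_one {t : ℝ} (ht : 0 < t) :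
    HasSum (fun n : ℕ ↦ (-1) ^ n * Real.exp (-(n + 1) * t)) (Real.exp t + 1)⁻¹ := by
  have hlt : |-Real.exp (-t)| < 1 := by simpa using ht
  convert! (hasSum_geometric_of_abs_lt_one hlt).mul_left (Real.exp (-t)) using 1
  · ext n
    rw [neg_pow (Real.exp (-t)), ← Real.exp_nat_mul, mul_left_comm, ← Real.exp_add]
    ring_nf
  · rw [Real.exp_neg, sub_neg_eq_add, ← mul_inv, mul_add, mul_one,
      mul_inv_cancel₀ (Real.exp_ne_zero t)]

lemma hasSum_integral_Ioi_pow_div_exp_add_one {a : ℝ} (ha : 0 < a) {k : ℕ} (hk : k ≠ 0) :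
    HasSum (fun n : ℕ ↦ k ! * (-1) ^ n / (a * (n + 1)) ^ (k + 1))
      (∫ s in Ioi 0, s ^ k * (Real.exp (a * s) + 1)⁻¹) := by
  refine hasSum_integral_Ioi_pow_mul_of_hasSum_exp (fun n ↦ by positivity) (fun s hs ↦ ?_) ?_
  · convert! hasSum_inv_exp_add_one (mul_pos ha hs) using 4
    ring
  · have hzeta : Summable fun n : ℕ ↦ 1 / ((n : ℝ) + 1) ^ (k + 1) := by
      have := (summable_nat_add_iff 1).2
        (Real.summable_one_div_nat_pow.2 (Nat.lt_add_of_pos_left (Nat.pos_of_ne_zero hk)))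
      exact_mod_cast this
    convert! hzeta.mul_left (1 / a ^ (k + 1)) using 2 with n
    rw [abs_pow, abs_neg, abs_one, one_pow, mul_pow, one_div_mul_one_div]

lemma hasSum_neg_one_pow_div_succ_sq :
    HasSum (fun n : ℕ ↦ (-1 : ℝ) ^ n / (n + 1) ^ 2) (Real.pi ^ 2 / 12) := by
  have hcos := hasSum_one_div_nat_pow_mul_cos one_ne_zero (x := 2⁻¹) (by norm_num)
  have hB₂ : (Polynomial.map (algebraMap ℚ ℝ) (Polynomial.bernoulli 2)).eval 2⁻¹ = -(1 / 12) :=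
    (bernoulliFun_two 2⁻¹).trans (by norm_num)
  have hcos_nat (n : ℕ) : Real.cos (2 * Real.pi * n * 2⁻¹) = (-1) ^ n := by
    rw [← Real.cos_nat_mul_pi]
    ring_nf
  simp only [mul_one, hB₂, hcos_nat] at hcos
  convert! ((hasSum_nat_add_iff' 1).2 hcos).neg using 1
  · ext n
    push_cast
    ring
  · simp only [Finset.sum_range_one, Nat.factorial_two]
    push_cast
    ring

lemma integral_Ioi_mul_inv_exp_add_one {a : ℝ} (ha : 0 < a) :
    ∫ s in Ioi 0, s * (Real.exp (a * s) + 1)⁻¹ = Real.pi ^ 2 / (12 * a ^ 2) := by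
  have h := hasSum_integral_Ioi_pow_div_exp_add_one ha one_ne_zero
  simp only [pow_one] at h
  refine h.unique ?_
  convert! hasSum_neg_one_pow_div_succ_sq.div_const (a ^ 2) using 1
  · ext n
    rw [Nat.factorial_one, Nat.cast_one, one_mul, mul_pow, div_div, mul_comm (a ^ 2)]
  · rw [div_div]

lemma integral_Ioi_mul_one_sub_tanh :
    ∫ s in Ioi 0, s * (1 - Real.tanh s) = Real.pi ^ 2 / 24 := by
  simp_rw [one_sub_tanh_eq, div_eq_mul_inv (2 : ℝ), mul_left_comm _ (2 : ℝ), integral_const_mul]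
  rw [integral_Ioi_mul_inv_exp_add_one two_pos]
  ring

lemma integral_Ioi_sq_mul_sech_sq : ∫ s in Ioi 0, s ^ 2 * sech s ^ 2 = Real.pi ^ 2 / 12 := by
  have h := integral_Ioi_pow_succ_mul_sech_sq 1
  simp only [pow_one, integral_Ioi_mul_one_sub_tanh] at h
  rw [h]
  push_cast
  ring

lemma integral_Ioi_cube_mul_tanh_mul_sech_sq :
    ∫ s in Ioi 0, s ^ 3 * (Real.tanh s * sech s ^ 2) = Real.pi ^ 2 / 8 := by
  rw [integral_Ioi_pow_succ_mul_tanh_mul_sech_sq 2, integral_Ioi_sq_mul_sech_sq]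
  push_cast
  ring

lemma integral_Ioi_pow_mul_exp_neg_mul {b : ℝ} (hb : 0 < b) (k : ℕ) :
    ∫ s in Ioi 0, s ^ k * Real.exp (-b * s) = k ! / b ^ (k + 1) := by
  have h := Real.integral_rpow_mul_exp_neg_mul_Ioi k.cast_add_one_pos hb
  simp only [add_sub_cancel_right, Real.rpow_natCast, Real.Gamma_nat_eq_factorial] at h
  simp only [neg_mul, h]
  norm_cast
  rw [one_div, inv_pow, inv_mul_eq_div]

lemma sq_mul_Phi_s_add_eq (s : ℝ) :
    s ^ 2 * (Phi_s s + (1/16) * Real.exp (2 * s) + 3/4) =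
      15 / 8 * (s ^ 2 * sech s ^ 2) - 15 / 8 * (s ^ 3 * (Real.tanh s * sech s ^ 2))
        - 1 / 16 * (s ^ 2 * Real.exp (-2 * s)) := by
  have hcosh : Real.cosh s ^ 2 = (Real.exp (2 * s) + 2 + Real.exp (-2 * s)) / 4 := by
    rw [neg_mul, Real.exp_neg, two_mul, Real.exp_add, Real.cosh_eq, Real.exp_neg]
    field_simp
    ring
  rw [Phi_s, hcosh]
  ring

/-- The integral identity `4∫₀^∞ s²(Φₛ(s) + e^{2s}/16 + 3/4) ds = −(5π² + 1)/16`,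
the integrand being integrable on `[0,∞)`. -/
theorem statement10 :
    IntegrableOn (fun s : ℝ => s ^ 2 * (Phi_s s + (1/16) * Real.exp (2 * s) + 3/4))
      (Set.Ioi 0) ∧
    4 * ∫ s in Set.Ioi (0:ℝ), s ^ 2 * (Phi_s s + (1/16) * Real.exp (2 * s) + 3/4)
      = -(1/16) * (5 * Real.pi ^ 2 + 1) := by
  have hsech : IntegrableOn (fun s ↦ 15 / 8 * (s ^ 2 * sech s ^ 2)) (Ioi 0) :=
    (integrableOn_Ioi_pow_mul_of_isBigO_exp_neg two_pos continuous_sech_sq.continuousOn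
      isBigO_sech_sq 2).const_mul _
  have htanh : IntegrableOn (fun s ↦ 15 / 8 * (s ^ 3 * (Real.tanh s * sech s ^ 2))) (Ioi 0) :=
    (integrableOn_Ioi_pow_mul_of_isBigO_exp_neg two_pos
      (continuous_tanh.mul continuous_sech_sq).continuousOn isBigO_tanh_mul_sech_sq 3).const_mul _
  have hexp : IntegrableOn (fun s ↦ 1 / 16 * (s ^ 2 * Real.exp (-2 * s))) (Ioi 0) :=
    (integrableOn_Ioi_pow_mul_of_isBigO_exp_neg two_pos (by fun_prop)
      (isBigO_refl _ _) 2).const_mul _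
  simp only [sq_mul_Phi_s_add_eq]
  refine ⟨(hsech.sub' htanh).sub' hexp, ?_⟩
  rw [integral_sub (hsech.sub' htanh) hexp, integral_sub hsech htanh]
  simp only [integral_const_mul, integral_Ioi_sq_mul_sech_sq,
    integral_Ioi_cube_mul_tanh_mul_sech_sq, integral_Ioi_pow_mul_exp_neg_mul two_pos]
  rw [Nat.factorial_two]
  push_cast
  ring
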